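/- arXiv:2202.02402 — 2 statements merged into one kernel-verified Lean document; each statement's English description precedes it below -/
import Mathlib

section
/- Let Ω ⊆ ℂ be a domain and K : Ω × Ω → ℂ a sesqui-analytic non-negative definite kernel. Then the function G_{K⁻¹}(z,w) := K(z,w)·∂∂̄K(z,w) − ∂K(z,w)·∂̄K(z,w) is a non-negative definite kernel on Ω, where ∂ denotes differentiation in z and ∂̄ denotes differentiation in the conjugate of w. -/
open scoped ComplexOrder

local notation "conj'" => (starRingEnd ℂ)

/-- `K` is a non-negative definite kernel on the set `s`. -/
def IsNNDOn (s : Set ℂ) (K : ℂ → ℂ → ℂ) : Prop :=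
  ∀ (p : ℕ) (x : Fin p → ℂ), (∀ i, x i ∈ s) →
    Matrix.PosSemidef (Matrix.of fun i j : Fin p => K (x i) (x j))

/-- `K` is sesqui-analytic on `s`: holomorphic in the first variable and
anti-holomorphic in the second. -/
def Sesq (s : Set ℂ) (K : ℂ → ℂ → ℂ) : Prop :=
  (∀ w ∈ s, AnalyticOnNhd ℂ (fun z => K z w) s) ∧
    (∀ z ∈ s, AnalyticOnNhd ℂ (fun w => conj' (K z w)) s)

/-- `∂`, the derivative in the first (holomorphic) variable. -/
noncomputable def D (K : ℂ → ℂ → ℂ) (z w : ℂ) : ℂ := deriv (fun u => K u w) z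

/-- `∂̄`, the derivative in the conjugate of the second (anti-holomorphic) variable. -/
noncomputable def Db (K : ℂ → ℂ → ℂ) (z w : ℂ) : ℂ :=
  conj' (deriv (fun u => conj' (K z u)) w)

/-!
For a fixed `h`, the kernel `K z w * K (z + h) (w + h) - K z (w + h) * K (z + h) w` is non-negative
definite: it consists of `2 × 2` minors of `K`, and is a compression of the Schur product of two
positive semidefinite matrices. Divided by `|h| ^ 2` it tends to `G_{K⁻¹}` as `h → 0`, and pointwise
limits preserve non-negative definiteness.

For the limit, put `F z w = K z (conj w)`, which is holomorphic in each variable separately. The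
minor of `F` on `{b, z} × {c, w}` is `(z - b) * (w - c)` times an expression in divided differences
of `F`, so one needs the mixed divided difference to be jointly continuous at `(b, c)`. It is again
separately holomorphic, and Hartogs' theorem makes separately holomorphic functions locally bounded,
hence jointly continuous by the Schwarz lemma.

Hartogs' theorem in turn rests on a growth estimate for Taylor coefficients `d n z`: the functions
`log⁺ |d n z| / n` are subharmonic, bounded, and tend to `0` pointwise, so by dominated convergence
their area means tend to `0`, which the submean value property turns into a uniform bound.
-/

section SubMeanValue

open MeasureTheory Metric Real Set
open scoped ENNReal

theorem log_norm_le_circleAverage_log_norm {g : ℂ → ℂ} {c : ℂ} {R : ℝ} (hR : R ≠ 0)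
    (hg : AnalyticOnNhd ℂ g (closedBall c |R|)) (hc : g c ≠ 0) :
    log ‖g c‖ ≤ circleAverage (fun z => log ‖g z‖) c R := by
  rw [hg.circleAverage_log_norm hR hc, le_add_iff_nonneg_left]
  refine finsum_nonneg fun u => ?_
  by_cases hu : u ∈ closedBall c |R|
  · refine mul_nonneg (mod_cast MeromorphicOn.AnalyticOnNhd.divisor_nonneg hg u) ?_
    rcases eq_or_ne c u with rfl | hcu
    · simp
    · rw [← log_abs, abs_mul, abs_inv, abs_norm, ← div_eq_mul_inv]
      refine log_nonneg ((one_le_div (norm_sub_pos_iff.2 hcu)).2 ?_)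
      rwa [mem_closedBall, dist_comm, dist_eq_norm] at hu
  · simp [hu]

theorem posLog_norm_le_circleAverage_posLog_norm {g : ℂ → ℂ} {c : ℂ} {R : ℝ}
    (hg : AnalyticOnNhd ℂ g (closedBall c |R|)) :
    log⁺ ‖g c‖ ≤ circleAverage (fun z => log⁺ ‖g z‖) c R := by
  rcases eq_or_ne R 0 with rfl | hR
  · simp
  have hmero : MeromorphicOn g (sphere c |R|) :=
    (hg.mono sphere_subset_closedBall).meromorphicOn
  have hnonneg : 0 ≤ circleAverage (fun z => log⁺ ‖g z‖) c R :=
    circleAverage_nonneg_of_nonneg fun z _ => posLog_nonneg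
  refine max_le hnonneg ?_
  rcases eq_or_ne (g c) 0 with hc | hc
  · simpa [hc] using hnonneg
  · exact (log_norm_le_circleAverage_log_norm hR hg hc).trans <|
      circleAverage_mono hmero.circleIntegrable_log_norm hmero.circleIntegrable_posLog_norm
        fun z _ => le_max_right _ _

theorem lintegral_circleMap_eq_circleAverage {u : ℂ → ℝ} {c : ℂ} {R : ℝ}
    (hu : ContinuousOn u (sphere c |R|)) (hnonneg : ∀ z ∈ sphere c |R|, 0 ≤ u z) :
    ∫⁻ θ in Ioo (-π) π, ENNReal.ofReal (u (circleMap c R θ)) =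
      ENNReal.ofReal (2 * π * circleAverage u c R) := by
  have hcont : Continuous fun θ => u (circleMap c R θ) :=
    hu.comp_continuous (continuous_circleMap c R) (circleMap_mem_sphere' c R)
  have havg : 2 * π * circleAverage u c R = ∫ θ in Ioo (-π) π, u (circleMap c R θ) := by
    rw [circleAverage_eq_integral_add (-π), smul_eq_mul, mul_inv_cancel_left₀ (by positivity),
      intervalIntegral.integral_comp_add_right (fun θ => u (circleMap c R θ)), zero_add,
      show 2 * π + -π = π by ring, intervalIntegral.integral_of_le (by linarith [pi_pos]),
      integral_Ioc_eq_integral_Ioo]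
  rw [havg, ofReal_integral_eq_lintegral_ofReal
    (hcont.integrableOn_Icc.mono_set Ioo_subset_Icc_self)
    (.of_forall fun θ => hnonneg _ (circleMap_mem_sphere' c R θ))]

theorem setLIntegral_ball_eq_lintegral_circleMap {f : ℂ → ℝ≥0∞} (hf : Measurable f) (c : ℂ)
    (R : ℝ) :
    ∫⁻ z in ball c R, f z =
      ∫⁻ r in Ioo 0 R, ENNReal.ofReal r * ∫⁻ θ in Ioo (-π) π, f (circleMap c r θ) := by
  have hpolar : ∀ p : ℝ × ℝ, Complex.polarCoord.symm p + c = circleMap c p.1 p.2 := fun p => by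
    simp [circleMap, Complex.exp_mul_I, add_comm]
  have hmeas : Measurable fun p : ℝ × ℝ => circleMap c p.1 p.2 := by
    unfold circleMap; fun_prop
  have hmem : ∀ p ∈ polarCoord.target, circleMap c p.1 p.2 ∈ ball c R ↔ p.1 ∈ Iio R :=
    fun p hp => by
      have hnorm : ‖circleMap c p.1 p.2 - c‖ = p.1 := by
        simpa [circleMap] using le_of_lt (mem_Ioi.1 hp.1)
      rw [mem_ball_iff_norm, hnorm, mem_Iio]
  calc
    ∫⁻ z in ball c R, f z
      = ∫⁻ p in polarCoord.target, ENNReal.ofReal p.1 •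
          (ball c R).indicator f (circleMap c p.1 p.2) := by
        rw [← lintegral_indicator measurableSet_ball, ← lintegral_add_right_eq_self _ c,
          ← Complex.lintegral_comp_polarCoord_symm]
        simp only [hpolar]
    _ = ∫⁻ p in polarCoord.target, (Iio R ×ˢ univ).indicator
          (fun p => ENNReal.ofReal p.1 * f (circleMap c p.1 p.2)) p := by
        refine setLIntegral_congr_fun polarCoord.open_target.measurableSet fun p hp => ?_
        by_cases hr : p.1 ∈ Iio R
        · rw [indicator_of_mem ((hmem p hp).2 hr), indicator_of_mem (mk_mem_prod hr (mem_univ _)),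
            smul_eq_mul]
        · rw [indicator_of_notMem (hr ∘ (hmem p hp).1), indicator_of_notMem (hr ·.1), smul_zero]
    _ = ∫⁻ p in Ioo 0 R ×ˢ Ioo (-π) π, ENNReal.ofReal p.1 * f (circleMap c p.1 p.2) := by
        rw [setLIntegral_indicator (measurableSet_Iio.prod .univ), polarCoord_target,
          prod_inter_prod, univ_inter, inter_comm, Ioi_inter_Iio]
    _ = _ := by
        have hm : Measurable fun p : ℝ × ℝ => ENNReal.ofReal p.1 * f (circleMap c p.1 p.2) :=
          measurable_fst.ennreal_ofReal.mul (hf.comp hmeas)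
        rw [Measure.volume_eq_prod, ← Measure.prod_restrict, lintegral_prod _ hm.aemeasurable]
        exact lintegral_congr fun r =>
          lintegral_const_mul (ENNReal.ofReal r) (by fun_prop : Measurable (f <| circleMap c r ·))

theorem volume_ball_mul_ofReal_le_setLIntegral {u : ℂ → ℝ} {c : ℂ} {R : ℝ}
    (hu : ContinuousOn u (ball c R)) (hnonneg : ∀ z ∈ ball c R, 0 ≤ u z)
    (hsub : ∀ r ∈ Ioo 0 R, u c ≤ circleAverage u c r) :
    volume (ball c R) * ENNReal.ofReal (u c) ≤ ∫⁻ z in ball c R, ENNReal.ofReal (u z) := by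
  classical
  set f := (ball c R).indicator fun z => ENNReal.ofReal (u z) with hf
  have hfm : Measurable f := by
    rw [hf, ← piecewise_eq_indicator]
    exact (ENNReal.continuous_ofReal.comp_continuousOn hu).measurable_piecewise
      continuousOn_const measurableSet_ball
  calc
    volume (ball c R) * ENNReal.ofReal (u c)
      = ∫⁻ r in Ioo 0 R, ENNReal.ofReal r * ∫⁻ _ in Ioo (-π) π, ENNReal.ofReal (u c) := by
        rw [← setLIntegral_ball_eq_lintegral_circleMap measurable_const, setLIntegral_const,
          mul_comm]
    _ ≤ ∫⁻ r in Ioo 0 R, ENNReal.ofReal r * ∫⁻ θ in Ioo (-π) π, f (circleMap c r θ) := by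
        refine setLIntegral_mono' measurableSet_Ioo fun r hr => mul_le_mul_right ?_ _
        have hsphere : sphere c |r| ⊆ ball c R := by
          rw [abs_of_pos hr.1]; exact sphere_subset_ball hr.2
        have hfu : ∀ θ, f (circleMap c r θ) = ENNReal.ofReal (u (circleMap c r θ)) := fun θ =>
          indicator_of_mem (hsphere (circleMap_mem_sphere' c r θ)) _
        simp only [hfu]
        rw [lintegral_circleMap_eq_circleAverage (hu.mono hsphere)
            fun z hz => hnonneg z (hsphere hz), setLIntegral_const, volume_Ioo,
          show π - -π = 2 * π by ring, mul_comm, ← ENNReal.ofReal_mul (by positivity)]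
        exact ENNReal.ofReal_le_ofReal (by gcongr; exact hsub r hr)
    _ = ∫⁻ z in ball c R, ENNReal.ofReal (u z) := by
        rw [← setLIntegral_ball_eq_lintegral_circleMap hfm,
          setLIntegral_indicator measurableSet_ball, inter_self]

end SubMeanValue

section HartogsLemma

open Filter MeasureTheory Metric Real Set Topology

theorem tendsto_lintegral_posLog_norm_div {α E : Type*} [MeasurableSpace α] {μ : Measure α}
    [IsFiniteMeasure μ] [SeminormedAddCommGroup E] {f : ℕ → α → E} {A C : ℝ}
    (hf : ∀ n, AEStronglyMeasurable (f n) μ) (hbound : ∀ n, ∀ᵐ x ∂μ, ‖f n x‖ ≤ A * C ^ n)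
    (hptwise : ∀ᵐ x ∂μ, ∃ M, ∀ n, ‖f n x‖ ≤ M) :
    Tendsto (fun n : ℕ => ∫⁻ x, ENNReal.ofReal (log⁺ ‖f n x‖ / n) ∂μ) atTop (𝓝 0) := by
  rw [← lintegral_zero (μ := μ)]
  refine tendsto_lintegral_of_dominated_convergence' (fun _ => ENNReal.ofReal (log⁺ A + log⁺ C))
    (fun n => ?_) (fun n => ?_) ?_ ?_
  · exact ((continuous_posLog.measurable.comp_aemeasurable
      (hf n).norm.aemeasurable).div_const _).ennreal_ofReal
  · filter_upwards [hbound n] with x hx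
    have hA : 0 ≤ log⁺ A := posLog_nonneg
    have hC : 0 ≤ log⁺ C := posLog_nonneg
    refine ENNReal.ofReal_le_ofReal ?_
    rcases n.eq_zero_or_pos with rfl | hn
    · simpa using add_nonneg hA hC
    have hn1 : (1 : ℝ) ≤ n := mod_cast hn
    refine div_le_of_le_mul₀ n.cast_nonneg (add_nonneg hA hC) ?_
    calc log⁺ ‖f n x‖ ≤ log⁺ (A * C ^ n) := posLog_le_posLog (norm_nonneg _) hx
      _ ≤ log⁺ A + n * log⁺ C := posLog_pow n C ▸ posLog_mul
      _ ≤ (log⁺ A + log⁺ C) * n := by nlinarith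
  · rw [lintegral_const]
    exact ENNReal.mul_ne_top ENNReal.ofReal_ne_top (measure_ne_top μ univ)
  · filter_upwards [hptwise] with x ⟨M, hM⟩
    rw [← ENNReal.ofReal_zero]
    refine ENNReal.tendsto_ofReal (squeeze_zero (fun n => div_nonneg posLog_nonneg n.cast_nonneg)
      (fun n => ?_) (tendsto_const_div_atTop_nhds_zero_nat (log⁺ M)))
    gcongr
    exact hM n

theorem le_pow_of_posLog_div_le {x q : ℝ} {n : ℕ} (hn : n ≠ 0) (hq : 0 < q)
    (h : log⁺ x / n ≤ log q) : x ≤ q ^ n :=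
  le_pow_of_log_le hq <| (le_max_right _ _).trans <| (div_le_iff₀' (by positivity)).1 h

theorem eventually_norm_le_pow_of_ball_subset {d : ℕ → ℂ → ℂ} {U : Set ℂ} {A C q s : ℝ}
    (hU : IsOpen U) (hvol : volume U ≠ ⊤) (hd : ∀ n, DifferentiableOn ℂ (d n) U)
    (hbound : ∀ n, ∀ z ∈ U, ‖d n z‖ ≤ A * C ^ n) (hptwise : ∀ z ∈ U, ∃ M, ∀ n, ‖d n z‖ ≤ M)
    (hq : 1 < q) (hs : 0 < s) :
    ∀ᶠ n in atTop, ∀ z, ball z s ⊆ U → ‖d n z‖ ≤ q ^ n := by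
  have : IsFiniteMeasure (volume.restrict U) := isFiniteMeasure_restrict.2 hvol
  have hlim := tendsto_lintegral_posLog_norm_div (μ := volume.restrict U)
    (fun n => (hd n).continuousOn.aestronglyMeasurable hU.measurableSet)
    (fun n => ae_restrict_of_forall_mem hU.measurableSet (hbound n))
    (ae_restrict_of_forall_mem hU.measurableSet hptwise)
  have hpos : 0 < volume (ball (0 : ℂ) s) * ENNReal.ofReal (log q) :=
    ENNReal.mul_pos (measure_ball_pos _ _ hs).ne' (ENNReal.ofReal_pos.2 (log_pos hq)).ne'
  filter_upwards [hlim.eventually_lt_const hpos, eventually_ne_atTop 0] with n hn hn0 z hz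
  have hmean : volume (ball z s) * ENNReal.ofReal (log⁺ ‖d n z‖ / n) ≤
      ∫⁻ w in ball z s, ENNReal.ofReal (log⁺ ‖d n w‖ / n) := by
    refine volume_ball_mul_ofReal_le_setLIntegral (u := fun w => log⁺ ‖d n w‖ / n)
      ((continuous_posLog.comp_continuousOn ((hd n).continuousOn.mono hz).norm).div_const _)
      (fun w _ => div_nonneg posLog_nonneg n.cast_nonneg) fun r hr => ?_
    have hsub : closedBall z |r| ⊆ U :=
      (abs_of_pos hr.1 ▸ closedBall_subset_ball hr.2).trans hz
    have := posLog_norm_le_circleAverage_posLog_norm (((hd n).analyticOnNhd hU).mono hsub)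
    simp only [div_eq_inv_mul, ← smul_eq_mul]
    rw [circleAverage_fun_smul]
    gcongr
  refine le_pow_of_posLog_div_le hn0 (zero_lt_one.trans hq) ?_
  have hlt := (hmean.trans (lintegral_mono_set hz)).trans_lt hn
  rw [Measure.addHaar_ball_center] at hlt
  exact (ENNReal.ofReal_le_ofReal_iff (log_pos hq).le).1 (lt_of_mul_lt_mul_left' hlt).le

theorem exists_norm_le_mul_pow_of_ball_subset {d : ℕ → ℂ → ℂ} {U : Set ℂ} {A C q s : ℝ}
    (hU : IsOpen U) (hvol : volume U ≠ ⊤) (hd : ∀ n, DifferentiableOn ℂ (d n) U)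
    (hbound : ∀ n, ∀ z ∈ U, ‖d n z‖ ≤ A * C ^ n) (hptwise : ∀ z ∈ U, ∃ M, ∀ n, ‖d n z‖ ≤ M)
    (hq : 1 < q) (hs : 0 < s) :
    ∃ B, ∀ n, ∀ z, ball z s ⊆ U → ‖d n z‖ ≤ B * q ^ n := by
  obtain ⟨N, hN⟩ := eventually_atTop.1
    (eventually_norm_le_pow_of_ball_subset hU hvol hd hbound hptwise hq hs)
  have hS : 0 ≤ ∑ k ∈ Finset.range N, |A * C ^ k| := Finset.sum_nonneg fun k _ => abs_nonneg _
  refine ⟨1 + ∑ k ∈ Finset.range N, |A * C ^ k|, fun n z hz => ?_⟩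
  rcases le_or_gt N n with hn | hn
  · exact (hN n hn z hz).trans (le_mul_of_one_le_left (by positivity) (by linarith))
  · have hle : |A * C ^ n| ≤ ∑ k ∈ Finset.range N, |A * C ^ k| :=
      Finset.single_le_sum (f := fun k => |A * C ^ k|) (fun k _ => abs_nonneg _)
        (Finset.mem_range.2 hn)
    calc ‖d n z‖ ≤ |A * C ^ n| := (hbound n z (hz (mem_ball_self hs))).trans (le_abs_self _)
      _ ≤ 1 + ∑ k ∈ Finset.range N, |A * C ^ k| := by linarith
      _ ≤ _ := le_mul_of_one_le_right (by linarith) (one_le_pow₀ hq.le)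

end HartogsLemma

section UniformBoundedness

open Set

theorem exists_isOpen_forall_norm_le {ι X E : Type*} [TopologicalSpace X] [BaireSpace X]
    [Nonempty X] [SeminormedAddCommGroup E] {f : ι → X → E} (hf : ∀ i, Continuous (f i))
    (hbound : ∀ x, ∃ C, ∀ i, ‖f i x‖ ≤ C) :
    ∃ U : Set X, IsOpen U ∧ U.Nonempty ∧ ∃ C, ∀ i, ∀ x ∈ U, ‖f i x‖ ≤ C := by
  have hclosed (n : ℕ) : IsClosed (⋂ i, {x | ‖f i x‖ ≤ n}) :=
    isClosed_iInter fun i => isClosed_le (hf i).norm continuous_const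
  have hcover : ⋃ n : ℕ, ⋂ i, {x | ‖f i x‖ ≤ n} = univ := eq_univ_of_forall fun x => by
    obtain ⟨C, hC⟩ := hbound x
    obtain ⟨n, hn⟩ := exists_nat_ge C
    exact mem_iUnion.2 ⟨n, mem_iInter.2 fun i => (hC i).trans hn⟩
  obtain ⟨n, hn⟩ := nonempty_interior_of_iUnion_of_closed hclosed hcover
  exact ⟨_, isOpen_interior, hn, n, fun i x hx => mem_iInter.1 (interior_subset hx) i⟩

end UniformBoundedness

/-- `F` is holomorphic in each variable separately on `U × V`; no joint continuity is assumed. -/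
def SeparatelyHolomorphicOn (F : ℂ → ℂ → ℂ) (U V : Set ℂ) : Prop :=
  (∀ w ∈ V, DifferentiableOn ℂ (fun z => F z w) U) ∧ ∀ z ∈ U, DifferentiableOn ℂ (F z) V

namespace SeparatelyHolomorphicOn

open Filter Function Metric Set Topology

variable {F : ℂ → ℂ → ℂ} {U V : Set ℂ}

theorem mono {U' V' : Set ℂ} (hF : SeparatelyHolomorphicOn F U V) (hU : U' ⊆ U) (hV : V' ⊆ V) :
    SeparatelyHolomorphicOn F U' V' :=
  ⟨fun w hw => (hF.1 w (hV hw)).mono hU, fun z hz => (hF.2 z (hU hz)).mono hV⟩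

theorem swap (hF : SeparatelyHolomorphicOn F U V) : SeparatelyHolomorphicOn (swap F) V U :=
  ⟨hF.2, hF.1⟩

theorem exists_ball_forall_norm_le {S : Set ℂ} (hF : SeparatelyHolomorphicOn F U V)
    (hS : IsCompact S) (hSU : S ⊆ U) (hV : IsOpen V) (hVne : V.Nonempty) :
    ∃ a ε C, 0 < ε ∧ ball a ε ⊆ V ∧ ∀ z ∈ S, ∀ w ∈ ball a ε, ‖F z w‖ ≤ C := by
  have := hV.locallyCompactSpace
  have := hVne.to_subtype
  obtain ⟨W, hWo, ⟨a, ha⟩, C, hC⟩ := exists_isOpen_forall_norm_le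
    (f := fun (z : S) (w : V) => F z w)
    (fun z => (hF.2 z (hSU z.2)).continuousOn.domRestrict)
    (fun w => by
      obtain ⟨C, hC⟩ := hS.exists_bound_of_continuousOn ((hF.1 w w.2).continuousOn.mono hSU)
      exact ⟨C, fun z => hC z z.2⟩)
  obtain ⟨ε, hε, hsub⟩ := isOpen_iff.1 (hV.isOpenMap_subtype_val W hWo) a (mem_image_of_mem _ ha)
  refine ⟨a, ε, C, hε, hsub.trans (Subtype.coe_image_subset V W), fun z hz w hw => ?_⟩
  obtain ⟨w, hwW, rfl⟩ := hsub hw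
  exact hC ⟨z, hz⟩ w hwW

end SeparatelyHolomorphicOn

section Schwarz

open Metric Set

theorem mapsTo_closedBall_two_mul_of_norm_le {X E : Type*} [SeminormedAddCommGroup E] {f : X → E}
    {s : Set X} {c : X} {M : ℝ} (hc : c ∈ s) (hM : ∀ x ∈ s, ‖f x‖ ≤ M) :
    MapsTo f s (closedBall (f c) (2 * M)) := fun x hx => by
  rw [mem_closedBall, dist_eq_norm]
  linarith [norm_sub_le (f x) (f c), hM x hx, hM c hc]

theorem dist_dslope_deriv_le_of_norm_le {E : Type*} [NormedAddCommGroup E] [NormedSpace ℂ E]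
    [CompleteSpace E] {f : ℂ → E} {c z : ℂ} {R M : ℝ} (hf : DifferentiableOn ℂ f (ball c R))
    (hM : ∀ w ∈ ball c R, ‖f w‖ ≤ M) (hz : z ∈ ball c R) :
    dist (dslope f c z) (deriv f c) ≤ 2 * (2 * M / R) / R * dist z c := by
  have hR : 0 < R := pos_of_mem_ball hz
  have hc : c ∈ ball c R := mem_ball_self hR
  have hbound : ∀ w ∈ ball c R, ‖dslope f c w‖ ≤ 2 * M / R := fun w hw =>
    Complex.norm_dslope_le_div_of_mapsTo_ball hf (mapsTo_closedBall_two_mul_of_norm_le hc hM) hw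
  rw [← dslope_same]
  exact Complex.dist_le_div_mul_dist_of_mapsTo_ball
    ((Complex.differentiableOn_dslope (ball_mem_nhds c hR)).2 hf)
    (mapsTo_closedBall_two_mul_of_norm_le hc hbound) hz

end Schwarz

namespace SeparatelyHolomorphicOn

open Filter Function Metric Set Topology

variable {F : ℂ → ℂ → ℂ} {U V : Set ℂ}

theorem differentiableOn_dslope_of_ne {a w : ℂ} (hF : SeparatelyHolomorphicOn F U V)
    (ha : a ∈ V) (hw : w ∈ V) (hne : w ≠ a) : DifferentiableOn ℂ (fun z => dslope (F z) a w) U := by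
  simp only [dslope_of_ne _ hne, slope_def_module]
  exact ((hF.1 w hw).sub (hF.1 a ha)).const_smul (w - a)⁻¹

theorem differentiableOn_deriv_of_norm_le {a : ℂ} {R M : ℝ}
    (hF : SeparatelyHolomorphicOn F U (ball a R)) (hU : IsOpen U) (hR : 0 < R)
    (hM : ∀ z ∈ U, ∀ w ∈ ball a R, ‖F z w‖ ≤ M) :
    DifferentiableOn ℂ (fun z => deriv (F z) a) U := by
  have hball : ∀ᶠ w in 𝓝[≠] a, w ∈ ball a R := nhdsWithin_le_nhds (ball_mem_nhds a hR)
  have hlim : Tendsto (fun w => 2 * (2 * M / R) / R * dist w a) (𝓝[≠] a) (𝓝 0) := by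
    refine tendsto_nhdsWithin_of_tendsto_nhds (Continuous.tendsto' ?_ a 0 (by simp))
    fun_prop
  have hunif : TendstoUniformlyOn (fun w z => dslope (F z) a w) (fun z => deriv (F z) a)
      (𝓝[≠] a) U := by
    refine tendstoUniformlyOn_iff.2 fun ε hε => ?_
    filter_upwards [hball, hlim.eventually_lt_const hε] with w hw hlt z hz
    rw [dist_comm]
    exact (dist_dslope_deriv_le_of_norm_le (hF.2 z hz) (hM z hz) hw).trans_lt hlt
  refine hunif.tendstoLocallyUniformlyOn.differentiableOn ?_ hU
  filter_upwards [hball, self_mem_nhdsWithin] with w hw hne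
  exact hF.differentiableOn_dslope_of_ne (mem_ball_self hR) hw hne

theorem differentiableOn_iteratedDeriv_of_norm_le {a : ℂ} {R M : ℝ}
    (hF : SeparatelyHolomorphicOn F U (ball a R)) (hU : IsOpen U) (hR : 0 < R)
    (hM : ∀ z ∈ U, ∀ w ∈ ball a R, ‖F z w‖ ≤ M) (n : ℕ) :
    DifferentiableOn ℂ (fun z => iteratedDeriv n (F z) a) U := by
  induction n generalizing F R M with
  | zero => simpa only [iteratedDeriv_zero] using hF.1 a (mem_ball_self hR)
  | succ n ih =>
    have hball : ∀ w ∈ ball a (R / 2), ball w (R / 2) ⊆ ball a R := fun w hw =>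
      ball_subset_ball' (by linarith [mem_ball.1 hw])
    simp only [iteratedDeriv_succ']
    refine ih (F := fun z => deriv (F z)) (M := 2 * M / (R / 2))
      ⟨fun w hw => ?_, fun z hz => ?_⟩ (half_pos hR) fun z hz w hw => ?_
    · exact (hF.mono Subset.rfl (hball w hw)).differentiableOn_deriv_of_norm_le hU (half_pos hR)
        fun z hz v hv => hM z hz v (hball w hw hv)
    · exact ((hF.2 z hz).deriv isOpen_ball).mono (ball_subset_ball (half_le_self hR.le))
    · exact Complex.norm_deriv_le_div_of_mapsTo_ball ((hF.2 z hz).mono (hball w hw))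
        (mapsTo_closedBall_two_mul_of_norm_le (mem_ball_self (half_pos hR))
          fun v hv => hM z hz v (hball w hw hv)) (half_pos hR)

end SeparatelyHolomorphicOn

section ScaledTaylorCoeff

open Metric
open scoped Nat

/-- The `n`-th Taylor coefficient of `f` at `a`, multiplied by `ρ ^ n`, so that it stays bounded
in `n` when `f` is holomorphic near the closed disc of radius `ρ`. -/
noncomputable def scaledTaylorCoeff (f : ℂ → ℂ) (a : ℂ) (ρ : ℝ) (n : ℕ) : ℂ :=
  (n ! : ℂ)⁻¹ * iteratedDeriv n f a * (ρ : ℂ) ^ n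

variable {f : ℂ → ℂ} {a w : ℂ} {ρ r M : ℝ}

theorem norm_scaledTaylorCoeff_le (hρ : 0 ≤ ρ) (hr : 0 < r) (hf : DiffContOnCl ℂ f (ball a r))
    (hM : ∀ z ∈ sphere a r, ‖f z‖ ≤ M) (n : ℕ) :
    ‖scaledTaylorCoeff f a ρ n‖ ≤ M * (ρ / r) ^ n := by
  have hcauchy := Complex.norm_iteratedDeriv_le_of_forall_mem_sphere_norm_le n hr hf hM
  calc ‖scaledTaylorCoeff f a ρ n‖ = (n ! : ℝ)⁻¹ * ‖iteratedDeriv n f a‖ * ρ ^ n := by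
        simp [scaledTaylorCoeff, abs_of_nonneg hρ]
    _ ≤ (n ! : ℝ)⁻¹ * (n ! * M / r ^ n) * ρ ^ n := by gcongr
    _ = M * (ρ / r) ^ n := by rw [div_pow]; field_simp

theorem hasSum_scaledTaylorCoeff (hρ : ρ ≠ 0) (hf : DifferentiableOn ℂ f (ball a r))
    (hw : w ∈ ball a r) :
    HasSum (fun n => scaledTaylorCoeff f a ρ n * ((w - a) / ρ) ^ n) (f w) := by
  convert! Complex.hasSum_taylorSeries_on_ball hf hw using 2 with n
  simp only [scaledTaylorCoeff, smul_eq_mul, div_pow]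
  field_simp

theorem norm_le_of_norm_scaledTaylorCoeff_le {B q t : ℝ} (hρ : 0 < ρ)
    (hf : DifferentiableOn ℂ f (ball a r)) (hw : w ∈ ball a r)
    (hB : ∀ n, ‖scaledTaylorCoeff f a ρ n‖ ≤ B * q ^ n) (hq : 0 ≤ q) (ht : ‖w - a‖ ≤ t * ρ)
    (hqt : q * t < 1) : ‖f w‖ ≤ B * (1 - q * t)⁻¹ := by
  have ht' : ‖(w - a) / ρ‖ ≤ t := by
    rwa [norm_div, Complex.norm_real, Real.norm_of_nonneg hρ.le, div_le_iff₀ hρ]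
  have hB' : 0 ≤ B := by simpa using (norm_nonneg _).trans (hB 0)
  have hterm : ∀ n, ‖scaledTaylorCoeff f a ρ n * ((w - a) / ρ) ^ n‖ ≤ B * (q * t) ^ n := fun n => by
    rw [norm_mul, norm_pow, mul_pow, ← mul_assoc]
    gcongr
    exact hB n
  have hqt' : 0 ≤ q * t := mul_nonneg hq ((norm_nonneg _).trans ht')
  exact (hasSum_scaledTaylorCoeff hρ.ne' hf hw).norm_le_of_bounded
    ((hasSum_geometric_of_lt_one hqt' hqt).mul_left B) hterm

end ScaledTaylorCoeff

namespace SeparatelyHolomorphicOn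

open Filter Function MeasureTheory Metric Set Topology

variable {F : ℂ → ℂ → ℂ} {U V : Set ℂ} {a b c : ℂ}

theorem exists_norm_scaledTaylorCoeff_le {ε ρ C q s : ℝ} (hF : SeparatelyHolomorphicOn F U V)
    (hU : IsOpen U) (hvol : volume U ≠ ⊤) (hε : 0 < ε) (hεV : ball a ε ⊆ V)
    (hC : ∀ z ∈ U, ∀ w ∈ ball a ε, ‖F z w‖ ≤ C) (hρ : 0 < ρ) (hρV : closedBall a ρ ⊆ V)
    (hq : 1 < q) (hs : 0 < s) :
    ∃ B, ∀ n, ∀ z, ball z s ⊆ U → ‖scaledTaylorCoeff (F z) a ρ n‖ ≤ B * q ^ n := by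
  have hhalf : closedBall a (ε / 2) ⊆ ball a ε := closedBall_subset_ball (half_lt_self hε)
  refine exists_norm_le_mul_pow_of_ball_subset (d := fun n z => scaledTaylorCoeff (F z) a ρ n)
    (A := C) (C := ρ / (ε / 2)) hU hvol (fun n => ?_) (fun n z hz => ?_) (fun z hz => ?_) hq hs
  · exact (((hF.mono Subset.rfl hεV).differentiableOn_iteratedDeriv_of_norm_le hU hε hC
      n).const_mul _).mul_const _
  · exact norm_scaledTaylorCoeff_le hρ.le (half_pos hε)
      ((hF.2 z hz).diffContOnCl_ball (hhalf.trans hεV))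
      (fun w hw => hC z hz w (hhalf (sphere_subset_closedBall hw))) n
  · obtain ⟨M, hM⟩ := (isCompact_closedBall a ρ).exists_bound_of_continuousOn
      ((hF.2 z hz).continuousOn.mono hρV)
    refine ⟨M, fun n => ?_⟩
    simpa [div_self hρ.ne'] using norm_scaledTaylorCoeff_le hρ.le hρ
      ((hF.2 z hz).diffContOnCl_ball hρV) (fun w hw => hM w (sphere_subset_closedBall hw)) n

/-- **Hartogs' theorem** on separate analyticity. The Baire category theorem bounds `F` on
`closedBall b R × ball a ε` for some `a` near `c`, so the Taylor coefficients of `F z` at `a` grow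
at most geometrically, uniformly in `z`; the Hartogs lemma improves the rate until the Taylor
series converges uniformly on a disc around `a` that contains a neighbourhood of `c`. -/
theorem exists_ball_prod_ball_forall_norm_le (hF : SeparatelyHolomorphicOn F U V)
    (hU : IsOpen U) (hV : IsOpen V) (hb : b ∈ U) (hc : c ∈ V) :
    ∃ δ > 0, ball b δ ⊆ U ∧ ball c δ ⊆ V ∧
      ∃ M, ∀ z ∈ ball b δ, ∀ w ∈ ball c δ, ‖F z w‖ ≤ M := by
  obtain ⟨R, hR, hRU, hRV⟩ : ∃ R > 0, closedBall b R ⊆ U ∧ closedBall c R ⊆ V := by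
    obtain ⟨R₁, hR₁, h₁⟩ := nhds_basis_closedBall.mem_iff.1 (hU.mem_nhds hb)
    obtain ⟨R₂, hR₂, h₂⟩ := nhds_basis_closedBall.mem_iff.1 (hV.mem_nhds hc)
    exact ⟨min R₁ R₂, lt_min hR₁ hR₂, (closedBall_subset_closedBall (min_le_left _ _)).trans h₁,
      (closedBall_subset_closedBall (min_le_right _ _)).trans h₂⟩
  have hbU : ball b R ⊆ U := ball_subset_closedBall.trans hRU
  have hcV : ball c (R / 8) ⊆ V :=
    (ball_subset_ball (by linarith)).trans (ball_subset_closedBall.trans hRV)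
  obtain ⟨a, ε, C, hε, haε, hC⟩ := (hF.mono Subset.rfl hcV).exists_ball_forall_norm_le
    (isCompact_closedBall b R) hRU isOpen_ball ⟨c, mem_ball_self (by positivity)⟩
  have hac : dist a c < R / 8 := haε (mem_ball_self hε)
  have haV : closedBall a (R / 2) ⊆ V := (closedBall_subset_closedBall' (by linarith)).trans hRV
  obtain ⟨B, hB⟩ := (hF.mono hbU Subset.rfl).exists_norm_scaledTaylorCoeff_le
    (q := 3 / 2) isOpen_ball measure_ball_lt_top.ne hε (haε.trans hcV)
    (fun z hz => hC z (ball_subset_closedBall hz)) (half_pos hR) haV (by norm_num) (half_pos hR)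
  refine ⟨R / 8, by positivity, (ball_subset_ball (by linarith)).trans hbU, hcV,
    B * (1 - 3 / 2 * (1 / 2))⁻¹, fun z hz w hw => ?_⟩
  rw [mem_ball] at hz hw
  have hwa : dist w a < R / 4 := by linarith [dist_triangle_right w a c]
  refine norm_le_of_norm_scaledTaylorCoeff_le (half_pos hR)
    ((hF.2 z (hbU (mem_ball.2 (by linarith)))).mono (ball_subset_closedBall.trans haV))
    (mem_ball.2 (by linarith)) (fun n => hB n z (ball_subset_ball' (by linarith)))
    (by norm_num) ?_ (by norm_num)
  rw [← dist_eq_norm]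
  linarith

end SeparatelyHolomorphicOn

section DividedDifference

open Filter Function Metric Set Topology

variable {F : ℂ → ℂ → ℂ} {U V : Set ℂ} {b c : ℂ}

namespace SeparatelyHolomorphicOn

theorem continuousAt_uncurry (hF : SeparatelyHolomorphicOn F U V) (hU : IsOpen U) (hV : IsOpen V)
    (hb : b ∈ U) (hc : c ∈ V) : ContinuousAt (uncurry F) (b, c) := by
  obtain ⟨δ, hδ, hδU, hδV, M, hM⟩ := hF.exists_ball_prod_ball_forall_norm_le hU hV hb hc
  have hbδ : b ∈ ball b δ := mem_ball_self hδ
  have hlip : ∀ᶠ p : ℂ × ℂ in 𝓝 (b, c), dist (F p.1 p.2) (F b p.2) ≤ 2 * M / δ * dist p.1 b := by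
    filter_upwards [prod_mem_nhds (ball_mem_nhds b hδ) (ball_mem_nhds c hδ)] with p ⟨hz, hw⟩
    exact Complex.dist_le_div_mul_dist_of_mapsTo_ball ((hF.1 p.2 (hδV hw)).mono hδU)
      (mapsTo_closedBall_two_mul_of_norm_le hbδ fun z hz => hM z hz p.2 hw) hz
  have hlim : Tendsto (fun p : ℂ × ℂ => 2 * M / δ * dist p.1 b) (𝓝 (b, c)) (𝓝 0) :=
    Continuous.tendsto' (by fun_prop) _ _ (by simp)
  have hFb : Tendsto (fun p : ℂ × ℂ => F b p.2) (𝓝 (b, c)) (𝓝 (F b c)) :=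
    ((hF.2 b hb).continuousOn.continuousAt (hV.mem_nhds hc)).tendsto.comp continuousAt_snd
  have hdist : Tendsto (fun p : ℂ × ℂ => dist (F b p.2) (F p.1 p.2)) (𝓝 (b, c)) (𝓝 0) :=
    squeeze_zero' (.of_forall fun _ => dist_nonneg) (by simpa only [dist_comm] using hlip) hlim
  exact (tendsto_iff_of_dist hdist).1 hFb

theorem dslope_right (hF : SeparatelyHolomorphicOn F U V) (hU : IsOpen U) (hV : IsOpen V)
    (hc : c ∈ V) : SeparatelyHolomorphicOn (fun z w => dslope (F z) c w) U V := by
  refine ⟨fun w hw => ?_, fun z hz =>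
    (Complex.differentiableOn_dslope (hV.mem_nhds hc)).2 (hF.2 z hz)⟩
  rcases eq_or_ne w c with rfl | hne
  · intro z hz
    obtain ⟨δ, hδ, hδU, hδV, M, hM⟩ := hF.exists_ball_prod_ball_forall_norm_le hU hV hz hc
    simp only [dslope_same]
    exact (((hF.mono hδU hδV).differentiableOn_deriv_of_norm_le isOpen_ball hδ hM).differentiableAt
      (ball_mem_nhds z hδ)).differentiableWithinAt
  · exact hF.differentiableOn_dslope_of_ne hc hw hne

theorem dslope_left (hF : SeparatelyHolomorphicOn F U V) (hU : IsOpen U) (hV : IsOpen V)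
    (hb : b ∈ U) : SeparatelyHolomorphicOn (fun z w => dslope (fun z' => F z' w) b z) U V :=
  (hF.swap.dslope_right hV hU hb).swap

end SeparatelyHolomorphicOn

theorem minor_eq_mul_dslope {𝕜 : Type*} [NontriviallyNormedField 𝕜] (F : 𝕜 → 𝕜 → 𝕜)
    (b c z w : 𝕜) :
    F b c * F z w - F b w * F z c = (z - b) * (w - c) *
      (F b c * dslope (fun z' => dslope (F z') c w) b z
        - dslope (fun z' => F z' c) b z * dslope (F b) c w) := by
  have hz := sub_smul_dslope (fun z' => F z' c) b z
  have hw := sub_smul_dslope (F b) c w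
  have hzw := sub_smul_dslope (fun z' => dslope (F z') c w) b z
  have hw' := sub_smul_dslope (F z) c w
  simp only [smul_eq_mul] at hz hw hzw hw'
  linear_combination (-(w - c) * F b c) * hzw - F b c * hw' + F b c * hw
    + (w - c) * dslope (F b) c w * hz + (F z c - F b c) * hw

theorem SeparatelyHolomorphicOn.tendsto_minor_div (hF : SeparatelyHolomorphicOn F U V)
    (hU : IsOpen U) (hV : IsOpen V) (hb : b ∈ U) (hc : c ∈ V) :
    Tendsto (fun p : ℂ × ℂ => (F b c * F p.1 p.2 - F b p.2 * F p.1 c) / ((p.1 - b) * (p.2 - c)))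
      (𝓝[≠] b ×ˢ 𝓝[≠] c)
      (𝓝 (F b c * deriv (fun z => deriv (F z) c) b
        - deriv (fun z => F z c) b * deriv (F b) c)) := by
  have hmixed := (((hF.dslope_right hU hV hc).dslope_left hU hV hb).continuousAt_uncurry hU hV
    hb hc).tendsto
  have hleft := (continuousAt_dslope_same.2 ((hF.1 c hc).differentiableAt (hU.mem_nhds hb))).tendsto
  have hright :=
    (continuousAt_dslope_same.2 ((hF.2 b hb).differentiableAt (hV.mem_nhds hc))).tendsto
  rw [nhds_prod_eq] at hmixed
  have hlim := ((hmixed.const_mul (F b c)).sub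
    ((hleft.comp tendsto_fst).mul (hright.comp tendsto_snd))).mono_left
    (prod_mono nhdsWithin_le_nhds nhdsWithin_le_nhds : 𝓝[≠] b ×ˢ 𝓝[≠] c ≤ 𝓝 b ×ˢ 𝓝 c)
  simp only [uncurry, dslope_same] at hlim
  refine hlim.congr' ?_
  filter_upwards [prod_mem_prod (self_mem_nhdsWithin (a := b)) (self_mem_nhdsWithin (a := c))]
    with p ⟨hz, hw⟩
  rw [minor_eq_mul_dslope]
  exact (mul_div_cancel_left₀ _ (mul_ne_zero (sub_ne_zero.2 hz) (sub_ne_zero.2 hw))).symm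

end DividedDifference

section PosSemidef

open Filter Matrix Topology

theorem isClosed_setOf_posSemidef {n R : Type*} [Finite n] [Ring R] [PartialOrder R] [StarRing R]
    [TopologicalSpace R] [IsTopologicalRing R] [ContinuousStar R] [OrderClosedTopology R] :
    IsClosed {A : Matrix n n R | A.PosSemidef} := by
  have := Fintype.ofFinite n
  simp only [posSemidef_iff_dotProduct_mulVec, Set.ofPred_and, Set.ofPred_forall, IsHermitian]
  refine (isClosed_eq (by fun_prop) continuous_id).inter (isClosed_iInter fun x => ?_)
  exact isClosed_le continuous_const
    (continuous_const.dotProduct (continuous_id.matrix_mulVec continuous_const))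

theorem posSemidef_minor {m n 𝕜 : Type*} [Finite n] [RCLike 𝕜] {P : Matrix m m 𝕜}
    (hP : P.PosSemidef) (u v : n → m) :
    (of fun i j => P (u i) (u j) * P (v i) (v j) - P (u i) (v j) * P (v i) (u j)).PosSemidef := by
  classical
  have := Fintype.ofFinite n
  have hN := (hP.submatrix (Sum.elim u v)).hadamard (hP.submatrix (Sum.elim v u))
  have hC := (hN.conjTranspose_mul_mul_same (fromRows (1 : Matrix n n 𝕜) (-1))).smul
    (show (0 : 𝕜) ≤ 2⁻¹ by positivity)
  convert! hC using 1
  ext i j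
  simp [Matrix.mul_apply, one_apply]
  ring

end PosSemidef

namespace IsNNDOn

open Filter Set Topology

variable {s t : Set ℂ} {K : ℂ → ℂ → ℂ}

theorem posSemidef {ι : Type*} [Finite ι] (hK : IsNNDOn s K) {x : ι → ℂ} (hx : ∀ i, x i ∈ s) :
    (Matrix.of fun i j => K (x i) (x j)).PosSemidef := by
  have e := Finite.equivFin ι
  convert! (hK _ (x ∘ e.symm) fun i => hx _).submatrix e using 1
  ext i j
  simp

theorem minor {g : ℂ → ℂ} (hK : IsNNDOn s K) (hts : t ⊆ s) (hg : MapsTo g t s) :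
    IsNNDOn t (fun z w => K z w * K (g z) (g w) - K z (g w) * K (g z) w) := fun _ x hx =>
  posSemidef_minor (hK.posSemidef (x := Sum.elim x (g ∘ x))
    (Sum.forall.2 ⟨fun i => hts (hx i), fun i => hg (hx i)⟩)) Sum.inl Sum.inr

theorem const_mul {a : ℂ} (ha : 0 ≤ a) (hK : IsNNDOn s K) : IsNNDOn s (fun z w => a * K z w) :=
  fun p x hx => (hK p x hx).smul ha

theorem of_tendsto {ι : Type*} {l : Filter ι} [l.NeBot] {t : ι → Set ℂ} {κ : ι → ℂ → ℂ → ℂ}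
    (hκ : ∀ᶠ h in l, IsNNDOn (t h) (κ h)) (ht : ∀ z ∈ s, ∀ᶠ h in l, z ∈ t h)
    (hlim : ∀ z ∈ s, ∀ w ∈ s, Tendsto (fun h => κ h z w) l (𝓝 (K z w))) : IsNNDOn s K := by
  intro p x hx
  refine isClosed_setOf_posSemidef.mem_of_tendsto (tendsto_pi_nhds.2 fun i =>
    tendsto_pi_nhds.2 fun j => hlim (x i) (hx i) (x j) (hx j)) ?_
  filter_upwards [hκ, eventually_all.2 fun i => ht (x i) (hx i)] with h hh hxh
  exact hh p x hxh

end IsNNDOn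

section SesquiAnalytic

open Filter Function Topology

variable {s : Set ℂ} {K : ℂ → ℂ → ℂ} {z w : ℂ}

theorem tendsto_nhdsNE_of_injective {X Y : Type*} [TopologicalSpace X] [TopologicalSpace Y]
    {f : X → Y} {x : X} (hf : ContinuousAt f x) (hinj : Injective f) :
    Tendsto f (𝓝[≠] x) (𝓝[≠] f x) :=
  hf.continuousWithinAt.tendsto_nhdsWithin fun _ hy => hinj.ne hy

theorem Sesq.separatelyHolomorphicOn (hs : Sesq s K) :
    SeparatelyHolomorphicOn (fun z w => K z (conj' w)) s (conj' ⁻¹' s) := by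
  refine ⟨fun w hw => (hs.1 _ hw).differentiableOn, fun z hz w hw => ?_⟩
  have hconj := (hs.2 z hz _ hw).differentiableAt.conj_conj
  simp only [comp_def, Complex.conj_conj] at hconj
  exact hconj.differentiableWithinAt

theorem Db_eq_deriv (K : ℂ → ℂ → ℂ) (z w : ℂ) :
    Db K z w = deriv (fun v => K z (conj' v)) (conj' w) := by
  have h := congrFun (deriv_conj_conj (𝕜 := ℂ) (f := fun u => conj' (K z u))) (conj' w)
  simp only [comp_def, Complex.conj_conj] at h
  exact h.symm

theorem Sesq.tendsto_minor_div (hs : Sesq s K) (hso : IsOpen s) (hz : z ∈ s) (hw : w ∈ s) :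
    Tendsto (fun h => (h * conj' h)⁻¹ * (K z w * K (z + h) (w + h) - K z (w + h) * K (z + h) w))
      (𝓝[≠] 0) (𝓝 (K z w * D (Db K) z w - D K z w * Db K z w)) := by
  have hadd : Tendsto (fun h => z + h) (𝓝[≠] 0) (𝓝[≠] z) := by
    simpa only [add_zero] using tendsto_nhdsNE_of_injective (x := (0 : ℂ))
      (by fun_prop) (add_right_injective z)
  have hconj : Tendsto (fun h => conj' w + conj' h) (𝓝[≠] 0) (𝓝[≠] (conj' w)) := by
    simpa only [comp_def, map_zero, add_zero] using tendsto_nhdsNE_of_injective (x := (0 : ℂ))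
      (by fun_prop) ((add_right_injective (conj' w)).comp (starRingEnd ℂ).injective)
  have hlim := (hs.separatelyHolomorphicOn.tendsto_minor_div hso
    (hso.preimage Complex.continuous_conj) hz (by simpa using hw)).comp (hadd.prodMk hconj)
  simp only [D, Db_eq_deriv]
  simpa only [comp_def, map_add, Complex.conj_conj, add_sub_cancel_left, div_eq_inv_mul] using hlim

end SesquiAnalytic

open Filter Set Topology in
theorem stmt_3_general (Ω : Set ℂ) (hΩo : IsOpen Ω) (K : ℂ → ℂ → ℂ) (hs : Sesq Ω K)
    (hK : IsNNDOn Ω K) :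
    IsNNDOn Ω (fun z w => K z w * D (Db K) z w - D K z w * Db K z w) := by
  refine IsNNDOn.of_tendsto (l := 𝓝[≠] (0 : ℂ)) (t := fun h => {z ∈ Ω | z + h ∈ Ω})
    (.of_forall fun h => (hK.minor (g := (· + h)) (sep_subset Ω _) fun z hz => hz.2).const_mul
      (inv_nonneg.2 (mul_star_self_nonneg h)))
    (fun z hz => ?_) (fun z hz w hw => hs.tendsto_minor_div hΩo hz hw)
  have hadd : Tendsto (fun h => z + h) (𝓝 0) (𝓝 z) :=
    Continuous.tendsto' (by fun_prop) _ _ (add_zero z)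
  filter_upwards [nhdsWithin_le_nhds (hadd.eventually_mem (hΩo.mem_nhds hz))] with h hh
  exact ⟨hz, hh⟩

/-- If `K` is a sesqui-analytic non-negative definite kernel on a domain `Ω ⊆ ℂ`, then
`G_{K⁻¹}(z,w) = K ∂∂̄K − ∂K ∂̄K` is a non-negative definite kernel on `Ω`. -/
theorem stmt_3 (Ω : Set ℂ) (hΩo : IsOpen Ω) (hΩc : IsConnected Ω) (K : ℂ → ℂ → ℂ)
    (hs : Sesq Ω K) (hK : IsNNDOn Ω K) :
    IsNNDOn Ω (fun z w => K z w * D (Db K) z w - D K z w * Db K z w) :=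
  stmt_3_general Ω hΩo K hs hK
end

section
/- Let f : Ω × Ω → ℂ be holomorphic, Ω ⊆ ℂᵐ a domain, with f vanishing on the diagonal Δ and all first-order derivatives ∂f/∂ζⱼ, j = 1,…,m, vanishing on Δ. Then for each z₀ ∈ Ω there is a neighbourhood Ω₀ of z₀ and holomorphic functions f_{ij}, 1 ≤ i ≤ j ≤ m, on Ω₀ × Ω₀ with f(z,ζ) = Σ_{1≤i≤j≤m} (zᵢ−ζᵢ)(zⱼ−ζⱼ)·f_{ij}(z,ζ). -/
/-!
Hadamard's lemma with parameters: if `f` is analytic near `(p, 0)`, the fundamental theorem of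
calculus along the segment from `(q, 0)` to `(q, w)` gives `f (q, w) = f (q, 0) + h (q, w) w` with
`h (q, w) = ∫ t in 0..1, ∂f/∂w (q, t w)`. Since `(q, w) ↦ (q, t w)` is linear, fixes `(p, 0)` and
has norm at most one, the power series of `∂f/∂w` at `(p, 0)` can be integrated term by term without
losing radius of convergence, so `h` is analytic. As `h (q, 0) = ∂f/∂w (q, 0)`, a second application
turns vanishing to second order along `w = 0` into `f (q, w) = B (q, w) w w`. The substitution
`w = ζ - z` moves the diagonal to `w = 0`.
-/

open Filter MeasureTheory Set Topology

section Contraction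

variable {𝕜 E F α : Type*} [RCLike 𝕜] [NormedAddCommGroup E] [NormedSpace 𝕜 E]
  [NormedAddCommGroup F] [NormedSpace 𝕜 F]

theorem continuous_compContinuousLinearMap_const {n : ℕ} (q : E [×n]→L[𝕜] F) :
    Continuous fun A : E →L[𝕜] E => q.compContinuousLinearMap fun _ => A :=
  ((ContinuousMultilinearMap.compContinuousLinearMapContinuousMultilinear 𝕜 (fun _ : Fin n => E)
    (fun _ => E) F).cont.comp (continuous_pi fun _ => continuous_id)).clm_apply continuous_const

theorem norm_compContinuousLinearMap_const_le {n : ℕ} (q : E [×n]→L[𝕜] F) {A : E →L[𝕜] E}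
    (hA : ‖A‖ ≤ 1) : ‖q.compContinuousLinearMap fun _ => A‖ ≤ ‖q‖ :=
  (q.norm_compContinuousLinearMap_le _).trans <| mul_le_of_le_one_right (norm_nonneg q) <|
    Finset.prod_le_one (fun _ _ => norm_nonneg A) fun _ _ => hA

variable [MeasurableSpace α] {μ : Measure α} [IsFiniteMeasure μ] {A : α → E →L[𝕜] E}

theorem integrable_compContinuousLinearMap (hA : AEStronglyMeasurable A μ)
    (hA_le : ∀ᵐ a ∂μ, ‖A a‖ ≤ 1) {n : ℕ} (q : E [×n]→L[𝕜] F) :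
    Integrable (fun a => q.compContinuousLinearMap fun _ => A a) μ :=
  .of_bound ((continuous_compContinuousLinearMap_const q).comp_aestronglyMeasurable hA) ‖q‖ <|
    hA_le.mono fun _ => norm_compContinuousLinearMap_const_le q

variable [NormedSpace ℝ F] [IsScalarTower ℝ 𝕜 F]

/-- The power series `∑ n, ∫ pₙ (A a y, …, A a y) ∂μ`, obtained from `p` by averaging over the
family of linear substitutions `A`. -/
noncomputable def averagedSeries (p : FormalMultilinearSeries 𝕜 E F) (A : α → E →L[𝕜] E)
    (μ : Measure α) : FormalMultilinearSeries 𝕜 E F :=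
  fun n => ∫ a, (p n).compContinuousLinearMap (fun _ => A a) ∂μ

theorem radius_le_radius_averagedSeries (hA_le : ∀ᵐ a ∂μ, ‖A a‖ ≤ 1)
    (p : FormalMultilinearSeries 𝕜 E F) : p.radius ≤ (averagedSeries p A μ).radius := by
  refine (FormalMultilinearSeries.radius_le_smul (c := μ.real univ)).trans
    (FormalMultilinearSeries.radius_le_of_le fun n => ?_)
  rw [FormalMultilinearSeries.smul_apply, norm_smul, Real.norm_of_nonneg measureReal_nonneg,
    mul_comm]
  exact norm_integral_le_of_norm_le_const <|
    hA_le.mono fun _ => norm_compContinuousLinearMap_const_le (p n)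

variable [CompleteSpace F]

theorem averagedSeries_apply (hA : AEStronglyMeasurable A μ) (hA_le : ∀ᵐ a ∂μ, ‖A a‖ ≤ 1)
    (p : FormalMultilinearSeries 𝕜 E F) (n : ℕ) (y : E) :
    averagedSeries p A μ n (fun _ => y) = ∫ a, p n (fun _ => A a y) ∂μ :=
  ((ContinuousMultilinearMap.apply 𝕜 (fun _ : Fin n => E) F fun _ => y).integral_comp_comm
    (integrable_compContinuousLinearMap hA hA_le (p n))).symm

theorem hasSum_averagedSeries (hA : AEStronglyMeasurable A μ) (hA_le : ∀ᵐ a ∂μ, ‖A a‖ ≤ 1)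
    {f : E → F} {p : FormalMultilinearSeries 𝕜 E F} {x y : E} {r : ENNReal}
    (hf : HasFPowerSeriesOnBall f p x r) (hx : ∀ᵐ a ∂μ, A a x = x) (hy : y ∈ Metric.eball 0 r) :
    HasSum (fun n => averagedSeries p A μ n fun _ => y) (∫ a, f (A a (x + y)) ∂μ) := by
  simp only [averagedSeries_apply hA hA_le]
  have norm_apply_le : ∀ᵐ a ∂μ, ‖A a y‖ ≤ ‖y‖ := hA_le.mono fun a ha =>
    ((A a).le_of_opNorm_le ha y).trans_eq (one_mul _)
  have summable_bound : Summable fun n => ‖p n‖ * ‖y‖ ^ n :=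
    p.summable_norm_mul_pow (r := ‖y‖₊) <| by
      simpa [enorm_eq_nnnorm] using Metric.eball_subset_eball hf.r_le hy
  refine hasSum_integral_of_dominated_convergence (fun n _ => ‖p n‖ * ‖y‖ ^ n) (fun n => ?_)
    (fun n => ?_) (ae_of_all _ fun _ => summable_bound) (integrable_const _) ?_
  · exact ((p n).cont.comp (continuous_pi fun _ => continuous_id)).comp_aestronglyMeasurable
      (hA.apply_continuousLinearMap y)
  · filter_upwards [norm_apply_le] with a ha
    exact (p n).le_opNorm_mul_pow_of_le <|
      (pi_norm_le_iff_of_nonneg (norm_nonneg y)).2 fun _ => ha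
  · filter_upwards [norm_apply_le, hx] with a ha hax
    rw [map_add, hax]
    refine hf.hasSum ?_
    rw [mem_eball_zero_iff] at hy ⊢
    exact (enorm_le_iff_norm_le.2 ha).trans_lt hy

theorem analyticAt_integral_comp_of_norm_le_one (hA : AEStronglyMeasurable A μ)
    (hA_le : ∀ᵐ a ∂μ, ‖A a‖ ≤ 1) {f : E → F} {x : E} (hx : ∀ᵐ a ∂μ, A a x = x)
    (hf : AnalyticAt 𝕜 f x) : AnalyticAt 𝕜 (fun y => ∫ a, f (A a y) ∂μ) x := by
  obtain ⟨p, r, hp⟩ := hf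
  exact ⟨averagedSeries p A μ, r, hp.r_le.trans (radius_le_radius_averagedSeries hA_le p), hp.r_pos,
    hasSum_averagedSeries hA hA_le hp hx⟩

end Contraction

section ScaleSnd

variable {𝕜 P V : Type*} [NontriviallyNormedField 𝕜] [NormedAddCommGroup P] [NormedSpace 𝕜 P]
  [NormedAddCommGroup V] [NormedSpace 𝕜 V]

/-- The linear map `(q, w) ↦ (q, s • w)`, which contracts `P × V` onto `P × {0}` as `s → 0`. -/
def scaleSnd (P V : Type*) [NormedAddCommGroup P] [NormedSpace 𝕜 P] [NormedAddCommGroup V]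
    [NormedSpace 𝕜 V] (s : 𝕜) : P × V →L[𝕜] P × V :=
  (ContinuousLinearMap.id 𝕜 P).prodMap (s • ContinuousLinearMap.id 𝕜 V)

@[simp]
theorem scaleSnd_apply (s : 𝕜) (x : P × V) : scaleSnd P V s x = (x.1, s • x.2) :=
  rfl

theorem norm_scaleSnd_le_one {s : 𝕜} (hs : ‖s‖ ≤ 1) : ‖scaleSnd P V s‖ ≤ 1 := by
  refine ContinuousLinearMap.opNorm_le_bound _ zero_le_one fun x => ?_
  rw [one_mul, scaleSnd_apply]
  refine max_le_max le_rfl ?_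
  rw [norm_smul]
  exact mul_le_of_le_one_left (norm_nonneg x.2) hs

theorem continuous_scaleSnd : Continuous (scaleSnd (𝕜 := 𝕜) P V) :=
  continuous_const.prod_mapL 𝕜 (continuous_id.smul continuous_const)

end ScaleSnd

section Hadamard

variable {𝕜 P V F : Type*} [RCLike 𝕜] [NormedAddCommGroup P] [NormedSpace 𝕜 P]
  [NormedAddCommGroup V] [NormedSpace 𝕜 V] [NormedAddCommGroup F] [NormedSpace 𝕜 F]

theorem fderiv_snd_eq_comp_inr {f : P × V → F} {x : P × V} (hf : DifferentiableAt 𝕜 f x) :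
    fderiv 𝕜 (fun w => f (x.1, w)) x.2 = (fderiv 𝕜 f x).comp (.inr 𝕜 P V) :=
  (hf.hasFDerivAt.comp x.2 (hasFDerivAt_prodMk_right x.1 x.2)).fderiv

variable [CompleteSpace F]

theorem eventually_forall_analyticAt_scaleSnd {f : P × V → F} {p : P} (hf : AnalyticAt 𝕜 f (p, 0)) :
    ∀ᶠ x in 𝓝 (p, (0 : V)), ∀ s : 𝕜, ‖s‖ ≤ 1 → AnalyticAt 𝕜 f (scaleSnd P V s x) := by
  obtain ⟨r, hr, hball⟩ := Metric.eventually_nhds_iff_ball.1 hf.eventually_analyticAt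
  filter_upwards [Metric.ball_mem_nhds _ hr] with x hx s hs
  refine hball _ ?_
  rw [mem_ball_iff_norm] at hx ⊢
  calc ‖scaleSnd P V s x - (p, 0)‖ = ‖scaleSnd P V s (x - (p, 0))‖ := by simp [Prod.sub_def]
    _ ≤ 1 * ‖x - (p, 0)‖ := (scaleSnd P V s).le_of_opNorm_le (norm_scaleSnd_le_one hs) _
    _ < r := by rwa [one_mul]

theorem analyticAt_fderiv_snd {f : P × V → F} {x : P × V} (hf : AnalyticAt 𝕜 f x) :
    AnalyticAt 𝕜 (fun y : P × V => fderiv 𝕜 (fun w => f (y.1, w)) y.2) x := by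
  have analyticAt_comp_inr : AnalyticAt 𝕜 (fun y => (fderiv 𝕜 f y).comp (.inr 𝕜 P V)) x :=
    (((ContinuousLinearMap.compL 𝕜 V (P × V) F).flip (.inr 𝕜 P V)).analyticAt _).comp hf.fderiv
  refine analyticAt_comp_inr.congr ?_
  filter_upwards [hf.eventually_analyticAt] with y hy
  exact (fderiv_snd_eq_comp_inr hy.differentiableAt).symm

section IntervalIntegral

variable [NormedSpace ℝ F] [IsScalarTower ℝ 𝕜 F]

theorem analyticAt_integral_comp_scaleSnd {H : P × V → F} {p : P} (hH : AnalyticAt 𝕜 H (p, 0)) :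
    AnalyticAt 𝕜 (fun x => ∫ t in (0 : ℝ)..1, H (scaleSnd P V (t : 𝕜) x)) (p, 0) := by
  simp only [intervalIntegral.integral_of_le zero_le_one]
  refine analyticAt_integral_comp_of_norm_le_one
    (continuous_scaleSnd.comp RCLike.continuous_ofReal).aestronglyMeasurable ?_
    (ae_of_all _ fun t => by simp) hH
  filter_upwards [ae_restrict_mem measurableSet_Ioc] with t ht
  exact norm_scaleSnd_le_one (by simpa [abs_of_pos ht.1] using ht.2)

theorem integral_fderiv_smul_apply_eq_sub {g : V → F} {w : V}
    (hg : ∀ t ∈ Icc (0 : ℝ) 1, ContDiffAt 𝕜 1 g ((t : 𝕜) • w)) :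
    (∫ t in (0 : ℝ)..1, fderiv 𝕜 g ((t : 𝕜) • w)) w = g w - g 0 := by
  have continuousOn_fderiv : ContinuousOn (fun t : ℝ => fderiv 𝕜 g ((t : 𝕜) • w)) (Icc 0 1) :=
    fun t ht => (ContinuousAt.comp (f := fun t : ℝ => (t : 𝕜) • w)
      ((hg t ht).continuousAt_fderiv one_ne_zero) (by fun_prop)).continuousWithinAt
  have hasDerivAt_line : ∀ t ∈ Icc (0 : ℝ) 1,
      HasDerivAt (fun s : 𝕜 => g (s • w)) (fderiv 𝕜 g ((t : 𝕜) • w) w) (t : 𝕜) := fun t ht =>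
    ((hg t ht).differentiableAt one_ne_zero).hasFDerivAt.comp_hasDerivAt (t : 𝕜)
      (by simpa using (hasDerivAt_id (t : 𝕜)).smul_const w)
  rw [ContinuousLinearMap.intervalIntegral_apply
    (continuousOn_fderiv.intervalIntegrable_of_Icc zero_le_one)]
  simpa [RCLike.real_smul_eq_coe_mul] using intervalIntegral.integral_unitInterval_deriv_eq_sub
    (f := fun s : 𝕜 => g (s • w)) (f' := fun s => fderiv 𝕜 g (s • w) w) (z₀ := 0) (z₁ := 1)
    (by simpa [RCLike.real_smul_eq_coe_mul] using continuousOn_fderiv.clm_apply continuousOn_const)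
    (by simpa [RCLike.real_smul_eq_coe_mul] using hasDerivAt_line)

end IntervalIntegral

theorem exists_analyticAt_eq_add_clm_apply {f : P × V → F} {p : P} (hf : AnalyticAt 𝕜 f (p, 0)) :
    ∃ h : P × V → V →L[𝕜] F, AnalyticAt 𝕜 h (p, 0) ∧
      (∀ q, h (q, 0) = fderiv 𝕜 (fun w => f (q, w)) 0) ∧
      ∀ᶠ x in 𝓝 (p, 0), f x = f (x.1, 0) + h x x.2 := by
  let : NormedSpace ℝ F := NormedSpace.restrictScalars ℝ 𝕜 F
  have : IsScalarTower ℝ 𝕜 F := RestrictScalars.isScalarTower ℝ 𝕜 F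
  refine ⟨fun x => ∫ t in (0 : ℝ)..1, fderiv 𝕜 (fun w => f (x.1, w)) ((t : 𝕜) • x.2),
    analyticAt_integral_comp_scaleSnd (analyticAt_fderiv_snd hf), fun q => by simp, ?_⟩
  filter_upwards [eventually_forall_analyticAt_scaleSnd hf] with x hx
  rw [integral_fderiv_smul_apply_eq_sub fun t ht => ?_, add_sub_cancel]
  have analyticAt_segment : AnalyticAt 𝕜 f (x.1, (t : 𝕜) • x.2) :=
    hx t (by simpa [abs_of_nonneg ht.1] using ht.2)
  exact analyticAt_segment.contDiffAt.comp _ (contDiffAt_const.prodMk contDiffAt_id)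

theorem exists_analyticAt_eq_clm_apply_apply {f : P × V → F} {p : P} (hf : AnalyticAt 𝕜 f (p, 0))
    (hf_zero : ∀ᶠ q in 𝓝 p, f (q, 0) = 0)
    (hf_fderiv : ∀ᶠ q in 𝓝 p, fderiv 𝕜 (fun w => f (q, w)) 0 = 0) :
    ∃ B : P × V → V →L[𝕜] V →L[𝕜] F, AnalyticAt 𝕜 B (p, 0) ∧
      ∀ᶠ x in 𝓝 (p, 0), f x = B x x.2 x.2 := by
  obtain ⟨h, hh, h_zero, hf_eq⟩ := exists_analyticAt_eq_add_clm_apply hf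
  obtain ⟨B, hB, -, hh_eq⟩ := exists_analyticAt_eq_add_clm_apply hh
  refine ⟨B, hB, ?_⟩
  filter_upwards [hf_eq, hh_eq, continuousAt_fst.eventually hf_zero,
    continuousAt_fst.eventually hf_fderiv] with x hfx hhx hx_zero hx_fderiv
  rw [hfx, hx_zero, zero_add, hhx, h_zero, hx_fderiv, zero_add]

theorem exists_analyticAt_eq_clm_apply_sub_apply_sub {f : V × V → F} {z₀ : V}
    (hf : AnalyticAt 𝕜 f (z₀, z₀)) (hf_zero : ∀ᶠ z in 𝓝 z₀, f (z, z) = 0)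
    (hf_fderiv : ∀ᶠ z in 𝓝 z₀, fderiv 𝕜 (fun ζ => f (z, ζ)) z = 0) :
    ∃ B : V × V → V →L[𝕜] V →L[𝕜] F, AnalyticAt 𝕜 B (z₀, z₀) ∧
      ∀ᶠ x in 𝓝 (z₀, z₀), f x = B x (x.1 - x.2) (x.1 - x.2) := by
  have analyticAt_shear : AnalyticAt 𝕜 (fun x : V × V => f (x.1, x.1 + x.2)) (z₀, 0) :=
    AnalyticAt.fun_comp (by simpa using hf)
      (analyticAt_fst.prod (analyticAt_fst.add analyticAt_snd))
  obtain ⟨B, hB, hB_eq⟩ := exists_analyticAt_eq_clm_apply_apply analyticAt_shear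
    (by simpa using hf_zero) <| hf_fderiv.mono fun z hz => by
      simpa [fderiv_comp_add_left (f := fun ζ => f (z, ζ))] using hz
  have tendsto_unshear : Tendsto (fun x : V × V => (x.1, x.2 - x.1)) (𝓝 (z₀, z₀)) (𝓝 (z₀, 0)) :=
    Continuous.tendsto' (by fun_prop) _ _ (by simp)
  refine ⟨fun x => B (x.1, x.2 - x.1), AnalyticAt.fun_comp (by simpa using hB)
    (analyticAt_fst.prod (analyticAt_snd.sub analyticAt_fst)), ?_⟩
  filter_upwards [tendsto_unshear.eventually hB_eq] with x hx
  rw [← neg_sub x.2 x.1, map_neg, map_neg, neg_apply, neg_neg]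
  simpa only [add_sub_cancel] using hx

end Hadamard

section Coordinates

variable {𝕜 ι F : Type*}

theorem sum_sum_eq_sum_sum_Ici {M : Type*} [AddCommMonoid M] [Fintype ι] [LinearOrder ι]
    [LocallyFiniteOrderTop ι] (a : ι → ι → M) :
    ∑ i, ∑ j, a i j =
      ∑ i, ∑ j ∈ Finset.Ici i, if i = j then a i i else a j i + a i j := by
  let : LocallyFiniteOrderBot ι := .ofIic ι (fun b => {x | x ≤ b}) (by simp)
  calc ∑ i, ∑ j, a i j = ∑ i, (a i i + ∑ j ∈ {i}ᶜ, a j i) := by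
        rw [Finset.sum_comm]
        exact Finset.sum_congr rfl fun i _ => Fintype.sum_eq_add_sum_compl i _
    _ = ∑ i, (a i i + ∑ j ∈ Finset.Ioi i, (a j i + a i j)) := by
        rw [Finset.sum_add_distrib, ← Finset.sum_sum_Ioi_add_eq_sum_sum_off_diag,
          ← Finset.sum_add_distrib]
    _ = ∑ i, ∑ j ∈ Finset.Ici i, if i = j then a i i else a j i + a i j := by
        refine Finset.sum_congr rfl fun i _ => ?_
        rw [← Finset.add_sum_Ioi_eq_sum_Ici, if_pos rfl]
        congr 1
        exact Finset.sum_congr rfl fun j hj => (if_neg (Finset.mem_Ioi.1 hj).ne).symm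

variable [NontriviallyNormedField 𝕜] [NormedAddCommGroup F] [NormedSpace 𝕜 F]

theorem fderiv_eq_zero_of_deriv_update_eq_zero [Finite ι] [DecidableEq ι] {f : (ι → 𝕜) → F}
    {z : ι → 𝕜} (hf : DifferentiableAt 𝕜 f z)
    (hz : ∀ i, deriv (fun t => f (Function.update z i t)) (z i) = 0) : fderiv 𝕜 f z = 0 := by
  cases nonempty_fintype ι
  refine ContinuousLinearMap.coe_injective <| LinearMap.pi_ext' fun i => LinearMap.ext_ring ?_
  have hasDerivAt_line : HasDerivAt (fun t => f (Function.update z i t))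
      (fderiv 𝕜 f z (Pi.single i 1)) (z i) :=
    HasFDerivAt.comp_hasDerivAt (z i) (by simpa using hf.hasFDerivAt) (hasDerivAt_update z i (z i))
  simpa using hasDerivAt_line.deriv.symm.trans (hz i)

theorem clm_apply_apply_eq_sum_sum [Fintype ι] [DecidableEq ι] (B : (ι → 𝕜) →L[𝕜] (ι → 𝕜) →L[𝕜] F)
    (v w : ι → 𝕜) :
    B v w = ∑ i, ∑ j, (v i * w j) • B (Pi.single i 1) (Pi.single j 1) := by
  conv_lhs => rw [pi_eq_sum_univ' v, pi_eq_sum_univ' w, map_sum B, sum_apply]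
  simp only [map_sum, map_smul, smul_apply, mul_comm (v _), mul_smul]

variable [Fintype ι] [LinearOrder ι]

/-- The coefficient of `wᵢ wⱼ`, for `i ≤ j`, in the quadratic form `w ↦ B w w` on `ι → 𝕜`. -/
def quadraticCoeff (B : (ι → 𝕜) →L[𝕜] (ι → 𝕜) →L[𝕜] F) (i j : ι) : F :=
  if i = j then B (Pi.single i 1) (Pi.single i 1)
  else B (Pi.single j 1) (Pi.single i 1) + B (Pi.single i 1) (Pi.single j 1)

theorem clm_apply_self_eq_sum_sum_Ici [LocallyFiniteOrderTop ι]
    (B : (ι → 𝕜) →L[𝕜] (ι → 𝕜) →L[𝕜] F) (w : ι → 𝕜) :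
    B w w = ∑ i, ∑ j ∈ Finset.Ici i, (w i * w j) • quadraticCoeff B i j := by
  rw [clm_apply_apply_eq_sum_sum, sum_sum_eq_sum_sum_Ici]
  refine Finset.sum_congr rfl fun i _ => Finset.sum_congr rfl fun j _ => ?_
  unfold quadraticCoeff
  split_ifs with hij
  · rw [hij]
  · rw [smul_add, mul_comm (w j)]

theorem analyticAt_quadraticCoeff {E : Type*} [NormedAddCommGroup E] [NormedSpace 𝕜 E]
    {B : E → (ι → 𝕜) →L[𝕜] (ι → 𝕜) →L[𝕜] F} {x : E} (hB : AnalyticAt 𝕜 B x) (i j : ι) :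
    AnalyticAt 𝕜 (fun y => quadraticCoeff (B y) i j) x := by
  have analyticAt_apply (v w : ι → 𝕜) : AnalyticAt 𝕜 (fun y => B y v w) x :=
    ((ContinuousLinearMap.apply 𝕜 F w).analyticAt _).fun_comp <|
      ((ContinuousLinearMap.apply 𝕜 ((ι → 𝕜) →L[𝕜] F) v).analyticAt _).fun_comp hB
  unfold quadraticCoeff
  split_ifs
  · exact analyticAt_apply _ _
  · exact (analyticAt_apply _ _).add (analyticAt_apply _ _)

end Coordinates

theorem stmt_16_general {𝕜 ι F : Type*} [RCLike 𝕜] [Fintype ι] [LinearOrder ι]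
    [LocallyFiniteOrderTop ι] [NormedAddCommGroup F] [NormedSpace 𝕜 F] [CompleteSpace F]
    {Ω : Set (ι → 𝕜)} (hΩo : IsOpen Ω) {f : (ι → 𝕜) × (ι → 𝕜) → F}
    (hf : ∀ z ∈ Ω, AnalyticAt 𝕜 f (z, z)) (hdiag : ∀ z ∈ Ω, f (z, z) = 0)
    (hdiag' : ∀ z ∈ Ω, ∀ j, deriv (fun t => f (z, Function.update z j t)) (z j) = 0) :
    ∀ z₀ ∈ Ω, ∃ Ω₀ : Set (ι → 𝕜), IsOpen Ω₀ ∧ z₀ ∈ Ω₀ ∧ Ω₀ ⊆ Ω ∧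
      ∃ g : ι → ι → (ι → 𝕜) × (ι → 𝕜) → F,
        (∀ i j, AnalyticOnNhd 𝕜 (g i j) (Ω₀ ×ˢ Ω₀)) ∧
        ∀ z ∈ Ω₀, ∀ ζ ∈ Ω₀,
          f (z, ζ) = ∑ i, ∑ j ∈ Finset.Ici i, ((z i - ζ i) * (z j - ζ j)) • g i j (z, ζ) := by
  intro z₀ hz₀
  have hΩ : ∀ᶠ z in 𝓝 z₀, z ∈ Ω := hΩo.mem_nhds hz₀
  have fderiv_diag : ∀ z ∈ Ω, fderiv 𝕜 (fun ζ => f (z, ζ)) z = 0 := fun z hz =>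
    fderiv_eq_zero_of_deriv_update_eq_zero
      ((hf z hz).differentiableAt.comp z (hasFDerivAt_prodMk_right z z).differentiableAt)
      (hdiag' z hz)
  obtain ⟨B, hB, hf_eq⟩ := exists_analyticAt_eq_clm_apply_sub_apply_sub (hf z₀ hz₀)
    (hΩ.mono hdiag) (hΩ.mono fderiv_diag)
  have eventually_analyticAt : ∀ᶠ x in 𝓝 (z₀, z₀),
      ∀ i j, AnalyticAt 𝕜 (fun y => quadraticCoeff (B y) i j) x :=
    eventually_all.2 fun i => eventually_all.2 fun j =>
      (analyticAt_quadraticCoeff hB i j).eventually_analyticAt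
  obtain ⟨U, hUo, hz₀U, hU⟩ := exists_nhds_square (hf_eq.and eventually_analyticAt)
  refine ⟨U ∩ Ω, hUo.inter hΩo, ⟨hz₀U, hz₀⟩, inter_subset_right,
    fun i j x => quadraticCoeff (B x) i j, ?_, ?_⟩
  · exact fun i j x hx => (hU ⟨hx.1.1, hx.2.1⟩).2 i j
  · exact fun z hz ζ hζ => (hU ⟨hz.1, hζ.1⟩).1.trans (clm_apply_self_eq_sum_sum_Ici _ (z - ζ))

/-- If `f` is holomorphic on `Ω × Ω`, `Ω ⊆ ℂᵐ` a domain, vanishes on the diagonal, and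
all first-order derivatives `∂f/∂ζⱼ` vanish on the diagonal, then near any `(z₀, z₀)`
it can be written as `f(z,ζ) = Σ_{i≤j} (zᵢ − ζᵢ)(zⱼ − ζⱼ) f_{ij}(z,ζ)` with `f_{ij}`
holomorphic. -/
theorem stmt_16 (m : ℕ) (Ω : Set (Fin m → ℂ)) (hΩo : IsOpen Ω) (hΩc : IsConnected Ω)
    (f : (Fin m → ℂ) × (Fin m → ℂ) → ℂ) (hf : AnalyticOnNhd ℂ f (Ω ×ˢ Ω))
    (hdiag : ∀ z ∈ Ω, f (z, z) = 0)
    (hdiag' : ∀ z ∈ Ω, ∀ j : Fin m,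
      deriv (fun t => f (z, Function.update z j t)) (z j) = 0) :
    ∀ z₀ ∈ Ω, ∃ Ω₀ : Set (Fin m → ℂ), IsOpen Ω₀ ∧ z₀ ∈ Ω₀ ∧ Ω₀ ⊆ Ω ∧
      ∃ g : Fin m → Fin m → (Fin m → ℂ) × (Fin m → ℂ) → ℂ,
        (∀ i j, AnalyticOnNhd ℂ (g i j) (Ω₀ ×ˢ Ω₀)) ∧
        ∀ z ∈ Ω₀, ∀ ζ ∈ Ω₀,
          f (z, ζ) = ∑ i : Fin m, ∑ j ∈ Finset.Ici i,
            (z i - ζ i) * (z j - ζ j) * g i j (z, ζ) :=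
  stmt_16_general hΩo (fun _ hz => hf _ ⟨hz, hz⟩) hdiag hdiag'
end
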